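/- Let k > 0 be real and x, y > 0. Then z^k e^{−zxy} D_k(zxy) tends to Γ(2k+1)/(2^k Γ(k+1) (xy)^k) as z → ∞ with z in the closed right half plane H = {z ∈ ℂ : Re z ≥ 0}, z ≠ 0; here z^k denotes the holomorphic branch of the power function on ℂ minus the non-positive reals with 1^k = 1. -/

import Mathlib

open MeasureTheory Filter Set

/-- The rank-one Dunkl kernel, defined by its integral representation. -/
noncomputable def Dk (k : ℝ) (u : ℂ) : ℂ :=
  ((Real.Gamma (k + 1/2) / (Real.Gamma (1/2) * Real.Gamma k) : ℝ) : ℂ) *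
    ∫ t in Icc (-1 : ℝ) 1,
      Complex.exp ((t : ℂ) * u) * (((1 - t) ^ (k - 1) * (1 + t) ^ k : ℝ) : ℂ)

open Topology

/-- The Gamma integral with a complex scale. -/
lemma gamma_int_complex (k : ℝ) (hk : 0 < k) (w : ℂ) (hw : 0 < w.re) :
    ∫ r in Ioi (0 : ℝ), Complex.exp (-(r * w)) * ((r ^ (k - 1) : ℝ) : ℂ) =
      w ^ (-(k : ℂ)) * Real.Gamma k := by
  have hint : ∀ (a c : ℝ), 0 < a → 0 < c →
      IntegrableOn (fun r : ℝ => Real.exp (-c * r) * r ^ (a - 1)) (Ioi 0) := by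
    intro a c ha hc
    have h := integrableOn_rpow_mul_exp_neg_mul_rpow (p := 1) (s := a - 1) (b := c)
      (by linarith) one_pos hc
    refine h.congr_fun (fun r hr => ?_) measurableSet_Ioi
    simp only [Real.rpow_one]
    ring
  have hnorm : ∀ (a : ℝ) (z : ℂ) (r : ℝ), 0 < r →
      ‖Complex.exp (-(r * z)) * ((r ^ (a - 1) : ℝ) : ℂ)‖ = Real.exp (-z.re * r) * r ^ (a - 1) := by
    intro a z r hr
    rw [norm_mul, Complex.norm_exp, Complex.norm_real, Real.norm_of_nonneg
      (Real.rpow_nonneg hr.le _)]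
    simp [mul_comm]
  have hopen : IsOpen {z : ℂ | 0 < z.re} := isOpen_lt continuous_const Complex.continuous_re
  have hpre : IsPreconnected {z : ℂ | 0 < z.re} := (convex_halfSpace_re_gt 0).isPreconnected
  have hd1 : DifferentiableOn ℂ (fun z : ℂ => ∫ r in Ioi (0 : ℝ),
      Complex.exp (-(r * z)) * ((r ^ (k - 1) : ℝ) : ℂ)) {z : ℂ | 0 < z.re} := by
    intro z hz
    have hz : 0 < z.re := hz
    have h := hasDerivAt_integral_of_dominated_loc_of_deriv_le
      (μ := volume.restrict (Ioi (0 : ℝ)))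
      (F := fun (z : ℂ) (r : ℝ) => Complex.exp (-(r * z)) * ((r ^ (k - 1) : ℝ) : ℂ))
      (F' := fun (z : ℂ) (r : ℝ) => Complex.exp (-(r * z)) * (-(r : ℂ)) * ((r ^ (k - 1) : ℝ) : ℂ))
      (x₀ := z) (s := Metric.ball z (z.re / 2))
      (bound := fun r => Real.exp (-(z.re / 2) * r) * r ^ (k + 1 - 1))
      (Metric.ball_mem_nhds _ (by positivity)) ?_ ?_ ?_ ?_ ?_ ?_
    · exact h.2.differentiableAt.differentiableWithinAt
    · exact Eventually.of_forall fun z => Measurable.aestronglyMeasurable (by fun_prop)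
    · refine (hint k z.re hk hz).mono' (Measurable.aestronglyMeasurable (by fun_prop)) ?_
      refine (ae_restrict_mem measurableSet_Ioi).mono fun r hr => ?_
      exact (hnorm k z r hr).le
    · exact Measurable.aestronglyMeasurable (by fun_prop)
    · refine (ae_restrict_mem measurableSet_Ioi).mono fun r hr v hv => ?_
      have hr : 0 < r := hr
      have h1 : |(v - z).re| ≤ ‖v - z‖ := Complex.abs_re_le_norm _
      have h2 : ‖v - z‖ < z.re / 2 := by simpa [dist_eq_norm] using hv
      have h3 : z.re / 2 ≤ v.re := by
        have := (abs_le.1 h1).1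
        simp at this
        linarith
      have h4 : Complex.exp (-(r * v)) * (-(r : ℂ)) * ((r ^ (k - 1) : ℝ) : ℂ) =
        -(r : ℂ) * (Complex.exp (-(r * v)) * ((r ^ (k - 1) : ℝ) : ℂ)) := by ring
      rw [h4, norm_mul, hnorm k v r hr, norm_neg, Complex.norm_real, Real.norm_of_nonneg hr.le,
        show k + 1 - 1 = (k - 1) + 1 by ring, Real.rpow_add_one hr.ne']
      have h5 : Real.exp (-v.re * r) ≤ Real.exp (-(z.re / 2) * r) := by
        gcongr
      calc r * (Real.exp (-v.re * r) * r ^ (k - 1))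
          = Real.exp (-v.re * r) * (r ^ (k - 1) * r) := by ring
        _ ≤ _ := by gcongr
    · exact hint (k + 1) (z.re / 2) (by linarith) (by positivity)
    · refine Eventually.of_forall fun r v hv => ?_
      have h1 : HasDerivAt (fun v : ℂ => -((r : ℂ) * v)) (-(r : ℂ)) v := by
        have h := ((hasDerivAt_id v).const_mul (r : ℂ)).neg
        simp only [mul_one] at h
        exact h
      exact h1.cexp.mul_const _
  have hd2 : DifferentiableOn ℂ (fun z : ℂ => z ^ (-(k : ℂ)) * (Real.Gamma k : ℂ))
      {z : ℂ | 0 < z.re} := by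
    intro z hz
    have hz : z ∈ Complex.slitPlane := Or.inl hz
    exact (((differentiableAt_id).cpow_const hz).mul_const _).differentiableWithinAt
  have key := (hd1.analyticOnNhd hopen).eqOn_of_preconnected_of_frequently_eq
    (hd2.analyticOnNhd hopen) hpre (z₀ := 1) (by simp) ?_
  · exact key hw
  · have hreal : ∀ x : ℝ, 0 < x → (∫ r in Ioi (0 : ℝ),
        Complex.exp (-(r * (x : ℂ))) * ((r ^ (k - 1) : ℝ) : ℂ)) =
        (x : ℂ) ^ (-(k : ℂ)) * Real.Gamma k := by
      intro x hx
      have h1 := Complex.integral_cpow_mul_exp_neg_mul_Ioi (a := (k : ℂ)) (r := x) (by simpa) hx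
      have harg : (x : ℂ).arg ≠ Real.pi := by
        rw [Complex.arg_ofReal_of_nonneg hx.le]
        exact Real.pi_pos.ne
      rw [Complex.cpow_neg, ← Complex.inv_cpow _ _ harg, ← one_div, ← Complex.Gamma_ofReal, ← h1]
      refine setIntegral_congr_fun measurableSet_Ioi fun r hr => ?_
      have hr : 0 < r := hr
      simp only [Complex.ofReal_cpow hr.le]
      push_cast
      ring_nf
    have ht : Tendsto (fun x : ℝ => (x : ℂ)) (𝓝[>] 1) (𝓝[≠] 1) := by
      refine tendsto_nhdsWithin_iff.2 ⟨?_, ?_⟩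
      · have : Tendsto (fun x : ℝ => (x : ℂ)) (𝓝 1) (𝓝 ((1 : ℝ) : ℂ)) :=
          Complex.continuous_ofReal.tendsto 1
        simpa using this.mono_left nhdsWithin_le_nhds
      · filter_upwards [self_mem_nhdsWithin] with x hx
        have : (1 : ℝ) < x := hx
        simpa using this.ne'
    refine ht.frequently (Eventually.frequently ?_)
    filter_upwards [self_mem_nhdsWithin] with x hx
    exact hreal x (lt_trans one_pos hx)


/-- dominating function -/
lemma dom_integrable (k m c : ℝ) (hk : 0 < k) (hm : 0 ≤ m) (hc : 0 < c) (A B : ℝ) :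
    IntegrableOn (fun r : ℝ => Real.exp (-c * r) * r ^ (k - 1) * (A + B * r ^ m)) (Ioi 0) := by
  have h1 := integrableOn_rpow_mul_exp_neg_mul_rpow (p := 1) (s := k - 1) (b := c)
    (by linarith) one_pos hc
  have h2 := integrableOn_rpow_mul_exp_neg_mul_rpow (p := 1) (s := k - 1 + m) (b := c)
    (by linarith) one_pos hc
  have h3 : IntegrableOn _ (Ioi (0 : ℝ)) volume := (h1.const_mul A).add (h2.const_mul B)
  refine h3.congr_fun (fun r hr => ?_) measurableSet_Ioi
  have hr : 0 < r := hr
  simp only [Pi.add_apply, Real.rpow_one, Real.rpow_add hr]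
  ring

lemma watson_norm (k : ℝ) (c : ℝ) (w : ℂ) (hw : c * ‖w‖ ≤ w.re)
    (r : ℝ) (hr : 0 < r) (v : ℂ) :
    ‖Complex.exp (-(r * w)) * ((r ^ (k - 1) : ℝ) : ℂ) * v‖ ≤
      Real.exp (-(c * ‖w‖) * r) * r ^ (k - 1) * ‖v‖ := by
  rw [norm_mul, norm_mul, Complex.norm_exp, Complex.norm_real, Real.norm_of_nonneg
    (Real.rpow_nonneg hr.le _)]
  gcongr
  simp
  nlinarith

lemma watson_integrable (k C m c : ℝ) (hk : 0 < k) (hm : 0 ≤ m) (hc : 0 < c)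
    (g : ℝ → ℂ) (hg : Measurable g) (hb : ∀ r, 0 < r → ‖g r‖ ≤ C * (1 + r ^ m)) (w : ℂ)
    (hw0 : w ≠ 0) (hw : c * ‖w‖ ≤ w.re) :
    IntegrableOn (fun r : ℝ => Complex.exp (-(r * w)) * ((r ^ (k - 1) : ℝ) : ℂ) * g r)
      (Ioi 0) := by
  have h := dom_integrable k m (c * ‖w‖) hk hm (by positivity) C C
  refine h.mono' ?_ ?_
  · exact Measurable.aestronglyMeasurable (by fun_prop)
  · refine (ae_restrict_mem measurableSet_Ioi).mono fun r hr => ?_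
    have hr : 0 < r := hr
    refine (watson_norm k c w hw r hr _).trans ?_
    gcongr
    linarith [hb r hr]

lemma watson (k C m c : ℝ) (hk : 0 < k) (hm : 0 ≤ m) (hc : 0 < c)
    (g : ℝ → ℂ) (g0 : ℂ) (hg : Measurable g) (hb : ∀ r, 0 < r → ‖g r‖ ≤ C * (1 + r ^ m))
    (h0 : Tendsto g (𝓝[>] 0) (𝓝 g0)) :
    Tendsto (fun w : ℂ => w ^ (k : ℂ) *
        ∫ r in Ioi (0 : ℝ), Complex.exp (-(r * w)) * ((r ^ (k - 1) : ℝ) : ℂ) * g r)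
      (comap (fun z : ℂ => ‖z‖) atTop ⊓ 𝓟 {w | c * ‖w‖ ≤ w.re})
      (𝓝 (g0 * (Real.Gamma k : ℂ))) := by
  have hC : 0 ≤ C := by
    have h1 := hb 1 one_pos
    have h2 := norm_nonneg (g 1)
    simp at h1
    linarith
  -- real DCT
  have hH : Tendsto (fun N : ℝ => ∫ ρ in Ioi (0 : ℝ),
      Real.exp (-c * ρ) * ρ ^ (k - 1) * ‖g (ρ / N) - g0‖) atTop (𝓝 0) := by
    have := tendsto_integral_filter_of_dominated_convergence (μ := volume.restrict (Ioi (0 : ℝ)))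
      (l := atTop) (F := fun N ρ => Real.exp (-c * ρ) * ρ ^ (k - 1) * ‖g (ρ / N) - g0‖)
      (f := fun _ => (0 : ℝ))
      (fun ρ => Real.exp (-c * ρ) * ρ ^ (k - 1) * ((C + ‖g0‖) + C * ρ ^ m)) ?_ ?_ ?_ ?_
    · simpa using this
    · refine Eventually.of_forall fun N => Measurable.aestronglyMeasurable ?_
      have : Measurable fun ρ : ℝ => g (ρ / N) := hg.comp (by fun_prop)
      fun_prop
    · filter_upwards [eventually_ge_atTop (1 : ℝ)] with N hN
      refine (ae_restrict_mem measurableSet_Ioi).mono fun r hr => ?_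
      have hr : 0 < r := hr
      rw [Real.norm_of_nonneg (by positivity)]
      gcongr
      have h1 := hb (r / N) (by positivity)
      have h2 : (r / N) ^ m ≤ r ^ m := by
        gcongr
        exact div_le_self hr.le hN
      have h3 := norm_sub_le (g (r / N)) g0
      nlinarith
    · exact dom_integrable k m c hk hm hc _ _
    · refine (ae_restrict_mem measurableSet_Ioi).mono fun r hr => ?_
      have hr : 0 < r := hr
      have h1 : Tendsto (fun N : ℝ => r / N) atTop (𝓝[>] 0) := by
        refine tendsto_nhdsWithin_iff.2 ⟨tendsto_const_nhds.div_atTop tendsto_id, ?_⟩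
        filter_upwards [eventually_gt_atTop (0 : ℝ)] with N hN
        exact div_pos hr hN
      have h2 := ((h0.comp h1).sub_const g0).norm.const_mul (Real.exp (-c * r) * r ^ (k - 1))
      simpa using h2
  rw [tendsto_iff_norm_sub_tendsto_zero]
  have hH2 : Tendsto (fun w : ℂ => ∫ ρ in Ioi (0 : ℝ),
      Real.exp (-c * ρ) * ρ ^ (k - 1) * ‖g (ρ / ‖w‖) - g0‖)
      (comap (fun z : ℂ => ‖z‖) atTop ⊓ 𝓟 {w | c * ‖w‖ ≤ w.re}) (𝓝 0) :=
    (hH.comp tendsto_comap).mono_left inf_le_left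
  refine squeeze_zero' (Eventually.of_forall fun _ => norm_nonneg _) ?_ hH2
  have e1 : ∀ᶠ w : ℂ in comap (fun z : ℂ => ‖z‖) atTop ⊓ 𝓟 {w | c * ‖w‖ ≤ w.re}, 1 ≤ ‖w‖ :=
    (tendsto_comap.eventually (eventually_ge_atTop (1 : ℝ))).filter_mono inf_le_left
  have e2 : ∀ᶠ w : ℂ in comap (fun z : ℂ => ‖z‖) atTop ⊓ 𝓟 {w | c * ‖w‖ ≤ w.re},
      c * ‖w‖ ≤ w.re := (eventually_principal.2 fun w hw => hw).filter_mono inf_le_right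
  filter_upwards [e1, e2] with w hw1 hw
  have hwp : 0 < ‖w‖ := by linarith
  have hw0 : w ≠ 0 := norm_pos_iff.1 hwp
  have hre : 0 < w.re := lt_of_lt_of_le (by positivity) hw
  have hI1 := watson_integrable k C m c hk hm hc g hg hb w hw0 hw
  have hI2 := watson_integrable k ‖g0‖ m c hk hm hc (fun _ => g0) measurable_const
    (fun r hr => le_mul_of_one_le_right (norm_nonneg _)
      (by linarith [Real.rpow_nonneg hr.le m])) w hw0 hw
  have hG : g0 * (Real.Gamma k : ℂ) = w ^ (k : ℂ) *
      ∫ r in Ioi (0 : ℝ), Complex.exp (-(r * w)) * ((r ^ (k - 1) : ℝ) : ℂ) * g0 := by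
    rw [integral_mul_const, gamma_int_complex k hk w hre, Complex.cpow_neg]
    have : w ^ (k : ℂ) ≠ 0 := by simp [Complex.cpow_eq_zero_iff, hw0]
    field_simp
  rw [hG, ← mul_sub, ← integral_sub hI1 hI2, norm_mul, Complex.norm_cpow_real]
  have hsub : ∀ r : ℝ, Complex.exp (-(r * w)) * ((r ^ (k - 1) : ℝ) : ℂ) * g r
      - Complex.exp (-(r * w)) * ((r ^ (k - 1) : ℝ) : ℂ) * g0 =
      Complex.exp (-(r * w)) * ((r ^ (k - 1) : ℝ) : ℂ) * (g r - g0) := fun r => by ring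
  simp only [hsub]
  have hI3 := (hI1.sub hI2).norm
  have hle : ‖∫ r in Ioi (0 : ℝ), Complex.exp (-(r * w)) * ((r ^ (k - 1) : ℝ) : ℂ) * (g r - g0)‖
      ≤ ∫ r in Ioi (0 : ℝ), Real.exp (-(c * ‖w‖) * r) * r ^ (k - 1) * ‖g r - g0‖ := by
    refine norm_integral_le_of_norm_le ?_ ?_
    · refine (dom_integrable k m (c * ‖w‖) hk hm (by positivity) (C + ‖g0‖) C).mono' ?_ ?_
      · exact Measurable.aestronglyMeasurable (by fun_prop)
      · refine (ae_restrict_mem measurableSet_Ioi).mono fun r hr => ?_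
        have hr : 0 < r := hr
        rw [Real.norm_of_nonneg (by positivity)]
        gcongr
        linarith [hb r hr, norm_sub_le (g r) g0]
    · refine (ae_restrict_mem measurableSet_Ioi).mono fun r hr => ?_
      exact watson_norm k c w hw r hr _
  refine (mul_le_mul_of_nonneg_left hle (by positivity)).trans (le_of_eq ?_)
  have hs := integral_comp_mul_left_Ioi
    (fun ρ => Real.exp (-c * ρ) * ρ ^ (k - 1) * ‖g (ρ / ‖w‖) - g0‖) 0 hwp
  rw [mul_zero, smul_eq_mul] at hs
  have hs' : ∫ ρ in Ioi (0 : ℝ), Real.exp (-c * ρ) * ρ ^ (k - 1) * ‖g (ρ / ‖w‖) - g0‖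
      = ‖w‖ * ∫ r in Ioi (0 : ℝ), Real.exp (-c * (‖w‖ * r)) * (‖w‖ * r) ^ (k - 1) *
        ‖g (‖w‖ * r / ‖w‖) - g0‖ := by
    rw [hs]; field_simp
  rw [hs', ← integral_const_mul, ← integral_const_mul]
  refine setIntegral_congr_fun measurableSet_Ioi fun r hr => ?_
  have hr : 0 < r := hr
  rw [Real.mul_rpow hwp.le hr.le, mul_div_cancel_left₀ _ hwp.ne', Real.rpow_sub_one hwp.ne',
    show -c * (‖w‖ * r) = -(c * ‖w‖) * r by ring]
  field_simp

/-- The contour integrand. -/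
noncomputable def ff (k : ℝ) (u s : ℂ) : ℂ :=
  Complex.exp (-(s * u)) * s ^ ((k - 1 : ℝ) : ℂ) * (2 - s) ^ (k : ℂ)

lemma real_mul_cpow (y : ℝ) (hy : 0 < y) (s : ℂ) (hs : s ≠ 0) (a : ℝ) :
    ((y : ℂ) * s) ^ (a : ℂ) = ((y ^ a : ℝ) : ℂ) * s ^ (a : ℂ) := by
  have hy' : (y : ℂ) ≠ 0 := by exact_mod_cast hy.ne'
  rw [Complex.ofReal_cpow hy.le, Complex.cpow_def_of_ne_zero (mul_ne_zero hy' hs),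
    Complex.cpow_def_of_ne_zero hy', Complex.cpow_def_of_ne_zero hs, Complex.log_ofReal_mul hy hs,
    ← Complex.exp_add, ← Complex.ofReal_log hy.le, add_mul]

lemma ff_left (k : ℝ) (u : ℂ) (y : ℝ) (hy : 0 < y) :
    ff k u (y * Complex.I) = Complex.exp (-(y * (Complex.I * u))) * ((y ^ (k - 1) : ℝ) : ℂ) *
      (Complex.I ^ ((k - 1 : ℝ) : ℂ) * (2 - y * Complex.I) ^ (k : ℂ)) := by
  unfold ff
  rw [real_mul_cpow y hy _ Complex.I_ne_zero]
  ring_nf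

lemma ff_right (k : ℝ) (u : ℂ) (y : ℝ) (hy : 0 < y) :
    ff k u (2 + y * Complex.I) = Complex.exp (-(2 * u)) *
      (Complex.exp (-(y * (Complex.I * u))) * ((y ^ ((k + 1) - 1) : ℝ) : ℂ) *
      ((-Complex.I) ^ (k : ℂ) * (2 + y * Complex.I) ^ ((k - 1 : ℝ) : ℂ))) := by
  unfold ff
  rw [show (2 : ℂ) - (2 + y * Complex.I) = y * (-Complex.I) by ring,
    real_mul_cpow y hy _ (neg_ne_zero.2 Complex.I_ne_zero),
    show -((2 + (y : ℂ) * Complex.I) * u) = -(2 * u) + -(y * (Complex.I * u)) by ring,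
    Complex.exp_add, show k + 1 - 1 = k by ring]
  ring

lemma norm_two_add (y : ℝ) (hy : 0 < y) (k : ℝ) (hk : 0 < k) (s : ℂ) (h : ‖s‖ = y) :
    ‖2 + s‖ ^ k ≤ 4 ^ k * (1 + y ^ k) := by
  have h1 : ‖2 + s‖ ≤ 2 + y := by
    have := norm_add_le 2 s
    simpa [h] using this
  have h2 : 0 ≤ y ^ k := by positivity
  have h3 : (0 : ℝ) ≤ 4 ^ k := by positivity
  rcases le_total y 2 with h4 | h4
  · calc ‖2 + s‖ ^ k ≤ 4 ^ k := by gcongr; linarith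
      _ ≤ _ := by nlinarith
  · calc ‖2 + s‖ ^ k ≤ (4 * y) ^ k := by gcongr; linarith
      _ = 4 ^ k * y ^ k := Real.mul_rpow (by norm_num) hy.le
      _ ≤ _ := by nlinarith

lemma gl_meas (k : ℝ) : Measurable (fun y : ℝ =>
    (Complex.I ^ ((k - 1 : ℝ) : ℂ) * (2 - (y : ℂ) * Complex.I) ^ (k : ℂ))) := by
  fun_prop

lemma gr_meas (k : ℝ) : Measurable (fun y : ℝ =>
    ((-Complex.I) ^ (k : ℂ) * (2 + (y : ℂ) * Complex.I) ^ ((k - 1 : ℝ) : ℂ))) := by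
  fun_prop

lemma gl_bound (k : ℝ) (hk : 0 < k) (y : ℝ) (hy : 0 < y) :
    ‖(Complex.I ^ ((k - 1 : ℝ) : ℂ) * (2 - (y : ℂ) * Complex.I) ^ (k : ℂ))‖ ≤
      4 ^ k * (1 + y ^ k) := by
  rw [norm_mul, Complex.norm_cpow_real, Complex.norm_cpow_real, Complex.norm_I, Real.one_rpow,
    one_mul, sub_eq_add_neg]
  exact norm_two_add y hy k hk _ (by simp [abs_of_pos hy])

lemma gr_bound (k : ℝ) (hk : 0 < k) (y : ℝ) (hy : 0 < y) :
    ‖((-Complex.I) ^ (k : ℂ) * (2 + (y : ℂ) * Complex.I) ^ ((k - 1 : ℝ) : ℂ))‖ ≤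
      4 ^ k * (1 + y ^ k) := by
  rw [norm_mul, Complex.norm_cpow_real, Complex.norm_cpow_real, norm_neg, Complex.norm_I,
    Real.one_rpow, one_mul]
  refine le_trans ?_ (norm_two_add y hy k hk (y * Complex.I) (by simp [abs_of_pos hy]))
  refine Real.rpow_le_rpow_of_exponent_le ?_ (by linarith)
  have := Complex.abs_re_le_norm (2 + y * Complex.I)
  simp at this
  linarith

lemma ff_left_int (k : ℝ) (hk : 0 < k) (u : ℂ) (hu : u.im < 0) :
    IntegrableOn (fun y : ℝ => ff k u (y * Complex.I)) (Ioi 0) := by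
  have hw0 : Complex.I * u ≠ 0 := by
    intro h; simp at h; simp [h] at hu
  have h := watson_integrable k (4 ^ k) k ((Complex.I * u).re / ‖Complex.I * u‖) hk hk.le
    (div_pos (by simpa using hu) (norm_pos_iff.2 hw0)) _ (gl_meas k) (gl_bound k hk)
    (Complex.I * u) hw0 (by rw [div_mul_cancel₀ _ (norm_ne_zero_iff.2 hw0)])
  exact h.congr_fun (fun y hy => (ff_left k u y hy).symm) measurableSet_Ioi

lemma ff_right_int (k : ℝ) (hk : 0 < k) (u : ℂ) (hu : u.im < 0) :
    IntegrableOn (fun y : ℝ => ff k u (2 + y * Complex.I)) (Ioi 0) := by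
  have hw0 : Complex.I * u ≠ 0 := by
    intro h; simp at h; simp [h] at hu
  have h := watson_integrable (k + 1) (4 ^ k) k ((Complex.I * u).re / ‖Complex.I * u‖)
    (by linarith) hk.le
    (div_pos (by simpa using hu) (norm_pos_iff.2 hw0)) _ (gr_meas k) (gr_bound k hk)
    (Complex.I * u) hw0 (by rw [div_mul_cancel₀ _ (norm_ne_zero_iff.2 hw0)])
  have h2 : IntegrableOn _ (Ioi (0 : ℝ)) volume := h.const_mul (Complex.exp (-(2 * u)))
  exact h2.congr_fun (fun y hy => (ff_right k u y hy).symm) measurableSet_Ioi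

lemma ff_norm (k : ℝ) (u : ℂ) (hu : 0 ≤ u.re) (t y : ℝ) (ht : 0 ≤ t) :
    ‖ff k u (t + y * Complex.I)‖ ≤ Real.exp (y * u.im) * ‖(t : ℂ) + y * Complex.I‖ ^ (k - 1) *
      ‖2 - ((t : ℂ) + y * Complex.I)‖ ^ k := by
  unfold ff
  rw [norm_mul, norm_mul, Complex.norm_cpow_real, Complex.norm_cpow_real, Complex.norm_exp]
  gcongr
  simp
  nlinarith

lemma ff_cauchy (k : ℝ) (u : ℂ) (ε R : ℝ) (hε : 0 < ε) (hR : ε ≤ R) :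
    (∫ x : ℝ in (0 : ℝ)..2, ff k u (x + ε * Complex.I)) =
      (∫ x : ℝ in (0 : ℝ)..2, ff k u (x + R * Complex.I)) -
      Complex.I * (∫ y : ℝ in ε..R, ff k u (2 + y * Complex.I)) +
      Complex.I * (∫ y : ℝ in ε..R, ff k u (y * Complex.I)) := by
  have h := Complex.integral_boundary_rect_eq_zero_of_differentiableOn (ff k u)
    ⟨0, ε⟩ ⟨2, R⟩ ?_
  · simp only [smul_eq_mul, Complex.ofReal_zero, zero_add, Complex.ofReal_ofNat] at h
    linear_combination h
  · intro s hs
    simp only [Complex.mem_reProdIm, uIcc_of_le hR] at hs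
    have him : 0 < s.im := lt_of_lt_of_le hε hs.2.1
    have h1 : s ∈ Complex.slitPlane := Or.inr him.ne'
    have h2 : 2 - s ∈ Complex.slitPlane := Or.inr (by simpa using him.ne')
    apply DifferentiableAt.differentiableWithinAt
    unfold ff
    exact ((by fun_prop : DifferentiableAt ℂ (fun s => Complex.exp (-(s * u))) s).mul
      (differentiableAt_id.cpow_const h1)).mul
      ((by fun_prop : DifferentiableAt ℂ (fun s : ℂ => 2 - s) s).cpow_const h2)

lemma tendsto_vertical (h : ℝ → ℂ) (hh : IntegrableOn h (Ioi 0)) :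
    Tendsto (fun n : ℝ => ∫ y : ℝ in n⁻¹..n, h y) atTop (𝓝 (∫ y in Ioi (0 : ℝ), h y)) := by
  have hc : AECover (volume.restrict (Ioi (0 : ℝ))) atTop (fun n : ℝ => Ioc n⁻¹ n) :=
    (aecover_Ioi_of_Ioi tendsto_inv_atTop_zero).inter (aecover_Iic tendsto_id)
  refine (hc.integral_tendsto_of_countably_generated hh).congr' ?_
  filter_upwards [eventually_ge_atTop (1 : ℝ)] with n hn
  have h1 : n⁻¹ ≤ n := (inv_le_one_of_one_le₀ hn).trans hn
  rw [intervalIntegral.integral_of_le h1, Measure.restrict_restrict measurableSet_Ioc,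
    inter_eq_left.2]
  intro y hy
  exact lt_trans (by positivity) hy.1

lemma tendsto_top (k : ℝ) (hk : 0 < k) (u : ℂ) (hu : 0 ≤ u.re) (hu' : u.im < 0) :
    Tendsto (fun n : ℝ => ∫ x : ℝ in (0 : ℝ)..2, ff k u (x + n * Complex.I)) atTop (𝓝 0) := by
  have h1 := (tendsto_rpow_mul_exp_neg_mul_atTop_nhds_zero (2 * k) (-u.im) (by linarith)).const_mul
    (3 ^ (2 * k) * 2)
  rw [mul_zero] at h1
  refine squeeze_zero_norm' ?_ h1
  filter_upwards [eventually_ge_atTop (1 : ℝ)] with n hn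
  have hb : ∀ x ∈ uIoc (0 : ℝ) 2, ‖ff k u (x + n * Complex.I)‖ ≤
      3 ^ (2 * k) * (n ^ (2 * k) * Real.exp (- -u.im * n)) := by
    intro x hx
    rw [uIoc_of_le (by norm_num)] at hx
    refine (ff_norm k u hu x n hx.1.le).trans ?_
    have a1 : 1 ≤ ‖(x : ℂ) + n * Complex.I‖ := by
      have := Complex.abs_im_le_norm (x + n * Complex.I)
      simp at this
      linarith [le_abs_self n]
    have a2 : ‖(x : ℂ) + n * Complex.I‖ ≤ 3 * n := by
      refine (norm_add_le _ _).trans ?_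
      simp [abs_of_pos hx.1, abs_of_pos (lt_of_lt_of_le one_pos hn)]
      linarith [hx.2]
    have a3 : ‖2 - ((x : ℂ) + n * Complex.I)‖ ≤ 3 * n := by
      rw [show 2 - ((x : ℂ) + n * Complex.I) = ((2 - x : ℝ) : ℂ) - n * Complex.I by
        push_cast; ring]
      refine (norm_sub_le _ _).trans ?_
      rw [Complex.norm_real, Real.norm_of_nonneg (by linarith [hx.2])]
      simp [abs_of_pos (lt_of_lt_of_le one_pos hn)]
      linarith [hx.1]
    have a4 : ‖(x : ℂ) + n * Complex.I‖ ^ (k - 1) ≤ (3 * n) ^ k :=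
      (Real.rpow_le_rpow_of_exponent_le a1 (show k - 1 ≤ k by linarith)).trans (by gcongr)
    have a5 : ‖2 - ((x : ℂ) + n * Complex.I)‖ ^ k ≤ (3 * n) ^ k := by gcongr
    have a6 : (3 * n) ^ k * (3 * n) ^ k = 3 ^ (2 * k) * n ^ (2 * k) := by
      rw [← Real.rpow_add (by positivity), ← two_mul, Real.mul_rpow (by norm_num) (by linarith)]
    calc _ ≤ Real.exp (n * u.im) * (3 * n) ^ k * (3 * n) ^ k := by gcongr
      _ = Real.exp (n * u.im) * ((3 * n) ^ k * (3 * n) ^ k) := by ring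
      _ = _ := by rw [a6]; ring_nf
  refine (intervalIntegral.norm_integral_le_of_norm_le_const hb).trans (le_of_eq ?_)
  norm_num
  ring

lemma tendsto_bottom (k : ℝ) (hk : 0 < k) (u : ℂ) (hu : 0 ≤ u.re) (hu' : u.im < 0) :
    Tendsto (fun n : ℝ => ∫ x : ℝ in (0 : ℝ)..2, ff k u (x + (n⁻¹ : ℝ) * Complex.I)) atTop
      (𝓝 (∫ x : ℝ in (0 : ℝ)..2, ff k u x)) := by
  refine intervalIntegral.tendsto_integral_filter_of_dominated_convergence
    (fun t => (t ^ (k - 1) + 3 ^ (k - 1)) * 3 ^ k) ?_ ?_ ?_ ?_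
  · refine Eventually.of_forall fun n => Measurable.aestronglyMeasurable ?_
    unfold ff
    fun_prop
  · filter_upwards [eventually_ge_atTop (1 : ℝ)] with n hn
    refine Eventually.of_forall fun x hx => ?_
    rw [uIoc_of_le (by norm_num)] at hx
    have hx0 : 0 < x := hx.1
    have hn0 : 0 < n⁻¹ := by positivity
    have hn1 : n⁻¹ ≤ 1 := inv_le_one_of_one_le₀ hn
    generalize n⁻¹ = e at hn0 hn1
    refine (ff_norm k u hu x e hx.1.le).trans ?_
    have a1 : x ≤ ‖(x : ℂ) + e * Complex.I‖ := by
      have := Complex.abs_re_le_norm (x + e * Complex.I)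
      simp at this
      linarith [le_abs_self x]
    have a2 : ‖(x : ℂ) + e * Complex.I‖ ≤ 3 := by
      refine (norm_add_le _ _).trans ?_
      simp [abs_of_pos hx.1, abs_of_pos hn0]
      linarith [hx.2]
    have a3 : ‖2 - ((x : ℂ) + e * Complex.I)‖ ≤ 3 := by
      rw [show 2 - ((x : ℂ) + e * Complex.I) = ((2 - x : ℝ) : ℂ) - e * Complex.I by
        push_cast; ring]
      refine (norm_sub_le _ _).trans ?_
      rw [Complex.norm_real, Real.norm_of_nonneg (by linarith [hx.2])]
      simp [abs_of_pos hn0]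
      linarith [hx.1]
    have a4 : ‖(x : ℂ) + e * Complex.I‖ ^ (k - 1) ≤ x ^ (k - 1) + 3 ^ (k - 1) := by
      have p1 : 0 ≤ x ^ (k - 1) := by positivity
      have p2 : (0 : ℝ) ≤ 3 ^ (k - 1) := by positivity
      rcases le_total k 1 with h | h
      · have := Real.rpow_le_rpow_of_nonpos hx0 a1 (show k - 1 ≤ 0 by linarith)
        linarith
      · have := Real.rpow_le_rpow (norm_nonneg _) a2 (show 0 ≤ k - 1 by linarith)
        linarith
    have a5 : ‖2 - ((x : ℂ) + e * Complex.I)‖ ^ k ≤ 3 ^ k := by gcongr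
    have a6 : Real.exp (e * u.im) ≤ 1 := by
      rw [Real.exp_le_one_iff]; nlinarith
    calc _ ≤ 1 * (x ^ (k - 1) + 3 ^ (k - 1)) * 3 ^ k := by gcongr
      _ = _ := by ring
  · exact ((intervalIntegral.intervalIntegrable_rpow' (by linarith)).add
      intervalIntegrable_const).mul_const _
  · have hne : ∀ᵐ x : ℝ, x ≠ 2 := Measure.ae_ne volume 2
    filter_upwards [hne] with x hx2 hx
    rw [uIoc_of_le (by norm_num)] at hx
    have hlt : x < 2 := lt_of_le_of_ne hx.2 hx2
    have hca : ContinuousAt (ff k u) (x : ℂ) := by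
      have h1 : (x : ℂ) ∈ Complex.slitPlane := Or.inl (by simpa using hx.1)
      have h2 : 2 - (x : ℂ) ∈ Complex.slitPlane := Or.inl (by simpa using hlt)
      unfold ff
      exact (((by fun_prop : DifferentiableAt ℂ (fun s => Complex.exp (-(s * u))) (x : ℂ)).mul
        (differentiableAt_id.cpow_const h1)).mul
        ((by fun_prop : DifferentiableAt ℂ (fun s : ℂ => 2 - s) (x : ℂ)).cpow_const
          h2)).continuousAt
    have ht : Tendsto (fun n : ℝ => (x : ℂ) + (n⁻¹ : ℝ) * Complex.I) atTop (𝓝 (x : ℂ)) := by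
      have h1 : Tendsto (fun n : ℝ => ((n⁻¹ : ℝ) : ℂ)) atTop (𝓝 ((0 : ℝ) : ℂ)) :=
        (Complex.continuous_ofReal.tendsto 0).comp tendsto_inv_atTop_zero
      simpa using (h1.mul_const Complex.I).const_add (x : ℂ)
    exact hca.tendsto.comp ht

lemma contour (k : ℝ) (hk : 0 < k) (u : ℂ) (hu : 0 ≤ u.re) (hu' : u.im < 0) :
    ∫ x : ℝ in (0 : ℝ)..2, ff k u x =
      Complex.I * (∫ y : ℝ in Ioi 0, ff k u (y * Complex.I)) -
      Complex.I * (∫ y : ℝ in Ioi 0, ff k u (2 + y * Complex.I)) := by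
  have h1 := tendsto_bottom k hk u hu hu'
  have h2 := ((tendsto_top k hk u hu hu').sub
    ((tendsto_vertical _ (ff_right_int k hk u hu')).const_mul Complex.I)).add
    ((tendsto_vertical _ (ff_left_int k hk u hu')).const_mul Complex.I)
  have h3 := tendsto_nhds_unique_of_eventuallyEq h1 h2 ?_
  · rw [h3]; ring
  · filter_upwards [eventually_ge_atTop (1 : ℝ)] with n hn
    exact ff_cauchy k u n⁻¹ n (by positivity) ((inv_le_one_of_one_le₀ hn).trans hn)

lemma ff_real (k : ℝ) (u : ℂ) (x : ℝ) (hx : 0 < x) (hx2 : x ≤ 2) :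
    ff k u x = Complex.exp (-(x * u)) * ((x ^ (k - 1) : ℝ) : ℂ) * (((2 - x) ^ k : ℝ) : ℂ) := by
  unfold ff
  rw [Complex.ofReal_cpow hx.le, Complex.ofReal_cpow (by linarith : 0 ≤ 2 - x)]
  push_cast
  rfl

lemma region_A (k : ℝ) (hk : 0 < k) :
    Tendsto (fun u : ℂ => u ^ (k : ℂ) * ∫ x : ℝ in (0 : ℝ)..2, ff k u x)
      (comap (fun z : ℂ => ‖z‖) atTop ⊓ 𝓟 {u | 1 / 2 * ‖u‖ ≤ u.re})
      (𝓝 (((2 ^ k : ℝ) : ℂ) * (Real.Gamma k : ℂ))) := by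
  have hg : Continuous (fun r : ℝ => (max (2 - r) 0) ^ k) :=
    (by fun_prop : Continuous fun r : ℝ => max (2 - r) 0).rpow_const fun _ => Or.inr hk.le
  have h := watson k (2 ^ k) k (1 / 2) hk hk.le (by norm_num)
    (fun r => (((max (2 - r) 0) ^ k : ℝ) : ℂ)) ((2 ^ k : ℝ) : ℂ)
    (Complex.continuous_ofReal.comp hg).measurable ?_ ?_
  · refine h.congr fun u => ?_
    congr 1
    rw [intervalIntegral.integral_of_le (by norm_num)]
    have hsub : Ioc (0 : ℝ) 2 ⊆ Ioi 0 := fun x hx => hx.1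
    rw [setIntegral_eq_of_subset_of_forall_sdiff_eq_zero measurableSet_Ioi hsub]
    · refine setIntegral_congr_fun measurableSet_Ioc fun x hx => ?_
      rw [ff_real k u x hx.1 hx.2, max_eq_left (by linarith [hx.2])]
    · intro x hx
      have : 2 < x := by
        by_contra hcon
        exact hx.2 ⟨hx.1, not_lt.1 hcon⟩
      rw [max_eq_right (by linarith), Real.zero_rpow hk.ne']
      simp
  · intro r hr
    rw [Complex.norm_real, Real.norm_of_nonneg (by positivity)]
    have h1 : (max (2 - r) 0) ^ k ≤ 2 ^ k := by
      gcongr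
      exact max_le (by linarith) (by norm_num)
    have h2 : 0 ≤ r ^ k := by positivity
    have h3 : (0 : ℝ) ≤ 2 ^ k := by positivity
    nlinarith
  · have := ((Complex.continuous_ofReal.comp hg).tendsto 0).mono_left
      (nhdsWithin_le_nhds (s := Ioi 0))
    simp only [Function.comp_def, sub_zero, Nat.ofNat_nonneg, sup_of_le_left] at this
    exact this

lemma region_B (k : ℝ) (hk : 0 < k) :
    Tendsto (fun u : ℂ => u ^ (k : ℂ) * ∫ x : ℝ in (0 : ℝ)..2, ff k u x)
      (comap (fun z : ℂ => ‖z‖) atTop ⊓ 𝓟 {u | 0 ≤ u.re ∧ 1 / 2 * ‖u‖ ≤ -u.im})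
      (𝓝 (((2 ^ k : ℝ) : ℂ) * (Real.Gamma k : ℂ))) := by
  set LB := comap (fun z : ℂ => ‖z‖) atTop ⊓ 𝓟 {u : ℂ | 0 ≤ u.re ∧ 1 / 2 * ‖u‖ ≤ -u.im} with hLB
  have hmap : Tendsto (fun u : ℂ => Complex.I * u) LB
      (comap (fun z : ℂ => ‖z‖) atTop ⊓ 𝓟 {w | 1 / 2 * ‖w‖ ≤ w.re}) := by
    refine tendsto_inf.2 ⟨?_, ?_⟩
    · rw [tendsto_comap_iff]
      refine Tendsto.mono_left ?_ inf_le_left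
      refine tendsto_comap.congr fun u => ?_
      simp
    · refine tendsto_principal.2 ?_
      refine (eventually_principal.2 fun u hu => ?_).filter_mono inf_le_right
      simpa using hu.2
  have hnorm : Tendsto (fun u : ℂ => ‖u‖) LB atTop := tendsto_comap.mono_left inf_le_left
  have t1 := (watson k (4 ^ k) k (1 / 2) hk hk.le (by norm_num) _
    (Complex.I ^ ((k - 1 : ℝ) : ℂ) * (2 - ((0 : ℝ) : ℂ) * Complex.I) ^ (k : ℂ))
    (gl_meas k) (gl_bound k hk) ?_).comp hmap
  swap
  · have : ContinuousAt (fun y : ℝ => (Complex.I ^ ((k - 1 : ℝ) : ℂ) *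
        (2 - (y : ℂ) * Complex.I) ^ (k : ℂ))) 0 := by
      refine ContinuousAt.mul continuousAt_const ?_
      exact ContinuousAt.cpow (by fun_prop) continuousAt_const (Or.inl (by simp))
    exact this.tendsto.mono_left nhdsWithin_le_nhds
  have t2 := (watson (k + 1) (4 ^ k) k (1 / 2) (by linarith) hk.le (by norm_num) _
    ((-Complex.I) ^ (k : ℂ) * (2 + ((0 : ℝ) : ℂ) * Complex.I) ^ ((k - 1 : ℝ) : ℂ))
    (gr_meas k) (gr_bound k hk) ?_).comp hmap
  swap
  · have : ContinuousAt (fun y : ℝ => ((-Complex.I) ^ (k : ℂ) *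
        (2 + (y : ℂ) * Complex.I) ^ ((k - 1 : ℝ) : ℂ))) 0 := by
      refine ContinuousAt.mul continuousAt_const ?_
      exact ContinuousAt.cpow (by fun_prop) continuousAt_const (Or.inl (by simp))
    exact this.tendsto.mono_left nhdsWithin_le_nhds
  have hev : ∀ᶠ u : ℂ in LB, 0 < ‖u‖ ∧ 0 ≤ u.re ∧ 1 / 2 * ‖u‖ ≤ -u.im := by
    refine (hnorm.eventually (eventually_gt_atTop 0)).and ?_
    exact (eventually_principal.2 fun u hu => hu).filter_mono inf_le_right
  have hIk : Complex.I ^ (k : ℂ) ≠ 0 := by simp [Complex.cpow_eq_zero_iff]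
  have s1 : Tendsto (fun u : ℂ => u ^ (k : ℂ) *
      (Complex.I * (∫ y : ℝ in Ioi 0, ff k u (y * Complex.I)))) LB
      (𝓝 (((2 ^ k : ℝ) : ℂ) * (Real.Gamma k : ℂ))) := by
    have t3 := t1.const_mul (Complex.I / Complex.I ^ (k : ℂ))
    have e : Complex.I / Complex.I ^ (k : ℂ) * (Complex.I ^ ((k - 1 : ℝ) : ℂ) *
        (2 - ((0 : ℝ) : ℂ) * Complex.I) ^ (k : ℂ) * (Real.Gamma k : ℂ)) =
        ((2 ^ k : ℝ) : ℂ) * (Real.Gamma k : ℂ) := by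
      have h1 : Complex.I ^ ((k - 1 : ℝ) : ℂ) = Complex.I ^ (k : ℂ) / Complex.I := by
        push_cast
        rw [Complex.cpow_sub _ _ Complex.I_ne_zero, Complex.cpow_one]
      rw [h1, Complex.ofReal_cpow (by norm_num)]
      have := Complex.I_ne_zero
      simp only [Complex.ofReal_zero, zero_mul, sub_zero, Complex.ofReal_ofNat]
      field_simp
    rw [e] at t3
    refine t3.congr' ?_
    filter_upwards [hev] with u hu
    have hu0 : u ≠ 0 := norm_pos_iff.1 hu.1
    have him : u.im < 0 := by linarith [hu.1, hu.2.2]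
    have hpow : (Complex.I * u) ^ (k : ℂ) = Complex.I ^ (k : ℂ) * u ^ (k : ℂ) := by
      rw [Complex.cpow_def_of_ne_zero (mul_ne_zero Complex.I_ne_zero hu0),
        Complex.cpow_def_of_ne_zero Complex.I_ne_zero, Complex.cpow_def_of_ne_zero hu0,
        (Complex.log_mul_eq_add_log_iff Complex.I_ne_zero hu0).2, add_mul, Complex.exp_add]
      rw [Complex.arg_I]
      have a1 : u.arg < 0 := Complex.arg_neg_iff.2 him
      have a2 := Complex.neg_pi_lt_arg u
      constructor <;> linarith [Real.pi_pos]
    have hint : ∫ y : ℝ in Ioi 0, ff k u (y * Complex.I) = ∫ y : ℝ in Ioi 0,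
        Complex.exp (-(y * (Complex.I * u))) * ((y ^ (k - 1) : ℝ) : ℂ) *
      (Complex.I ^ ((k - 1 : ℝ) : ℂ) * (2 - y * Complex.I) ^ (k : ℂ)) :=
      setIntegral_congr_fun measurableSet_Ioi fun y hy => ff_left k u y hy
    simp only [Function.comp]
    rw [hint, hpow]
    generalize (∫ y : ℝ in Ioi 0,
        Complex.exp (-(y * (Complex.I * u))) * ((y ^ (k - 1) : ℝ) : ℂ) *
      (Complex.I ^ ((k - 1 : ℝ) : ℂ) * (2 - y * Complex.I) ^ (k : ℂ))) = J
    field_simp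
  have s2 : Tendsto (fun u : ℂ => u ^ (k : ℂ) *
      (Complex.I * (∫ y : ℝ in Ioi 0, ff k u (2 + y * Complex.I)))) LB (𝓝 0) := by
    have t3 := (tendsto_inv_atTop_zero.comp hnorm).mul t2.norm
    rw [zero_mul] at t3
    refine squeeze_zero_norm' ?_ t3
    filter_upwards [hev] with u hu
    have hint : ∫ y : ℝ in Ioi 0, ff k u (2 + y * Complex.I) = Complex.exp (-(2 * u)) *
        ∫ y : ℝ in Ioi 0,
        (Complex.exp (-(y * (Complex.I * u))) * ((y ^ ((k + 1) - 1) : ℝ) : ℂ) *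
      ((-Complex.I) ^ (k : ℂ) * (2 + y * Complex.I) ^ ((k - 1 : ℝ) : ℂ))) := by
      rw [← integral_const_mul]
      exact setIntegral_congr_fun measurableSet_Ioi fun y hy => ff_right k u y hy
    simp only [Function.comp]
    rw [hint]
    simp only [norm_mul, Complex.norm_cpow_real, Complex.norm_I, one_mul]
    have e1 : ‖Complex.exp (-(2 * u))‖ ≤ 1 := by
      rw [Complex.norm_exp, Real.exp_le_one_iff]
      simpa using hu.2.1
    rw [Real.rpow_add_one hu.1.ne']
    have hN := hu.1
    have hJ := norm_nonneg (∫ y : ℝ in Ioi 0, (Complex.exp (-(y * (Complex.I * u))) *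
      ((y ^ ((k + 1) - 1) : ℝ) : ℂ) *
      ((-Complex.I) ^ (k : ℂ) * (2 + y * Complex.I) ^ ((k - 1 : ℝ) : ℂ))))
    generalize ‖∫ y : ℝ in Ioi 0, (Complex.exp (-(y * (Complex.I * u))) *
      ((y ^ ((k + 1) - 1) : ℝ) : ℂ) *
      ((-Complex.I) ^ (k : ℂ) * (2 + y * Complex.I) ^ ((k - 1 : ℝ) : ℂ)))‖ = J at hJ ⊢
    calc ‖u‖ ^ k * (‖Complex.exp (-(2 * u))‖ * J) ≤ ‖u‖ ^ k * (1 * J) := by gcongr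
      _ = ‖u‖⁻¹ * (‖u‖ ^ k * ‖u‖ * J) := by field_simp
  have s3 := s1.sub s2
  rw [sub_zero] at s3
  refine s3.congr' ?_
  filter_upwards [hev] with u hu
  rw [contour k hk u hu.2.1 (by linarith [hu.1, hu.2.2])]
  ring

lemma region_C (k : ℝ) (hk : 0 < k) :
    Tendsto (fun u : ℂ => u ^ (k : ℂ) * ∫ x : ℝ in (0 : ℝ)..2, ff k u x)
      (comap (fun z : ℂ => ‖z‖) atTop ⊓ 𝓟 {u | 0 ≤ u.re ∧ 1 / 2 * ‖u‖ ≤ u.im})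
      (𝓝 (((2 ^ k : ℝ) : ℂ) * (Real.Gamma k : ℂ))) := by
  have hmap : Tendsto (fun u : ℂ => (starRingEnd ℂ) u)
      (comap (fun z : ℂ => ‖z‖) atTop ⊓ 𝓟 {u | 0 ≤ u.re ∧ 1 / 2 * ‖u‖ ≤ u.im})
      (comap (fun z : ℂ => ‖z‖) atTop ⊓ 𝓟 {u | 0 ≤ u.re ∧ 1 / 2 * ‖u‖ ≤ -u.im}) := by
    refine tendsto_inf.2 ⟨?_, ?_⟩
    · rw [tendsto_comap_iff]
      refine Tendsto.mono_left ?_ inf_le_left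
      refine tendsto_comap.congr fun u => ?_
      simp
    · refine tendsto_principal.2 ?_
      refine (eventually_principal.2 fun u hu => ?_).filter_mono inf_le_right
      simpa using hu
  have h := (Complex.continuous_conj.tendsto _).comp ((region_B k hk).comp hmap)
  rw [map_mul, Complex.conj_ofReal, Complex.conj_ofReal] at h
  refine h.congr' ?_
  have hev : ∀ᶠ u : ℂ in (comap (fun z : ℂ => ‖z‖) atTop ⊓
      𝓟 {u | 0 ≤ u.re ∧ 1 / 2 * ‖u‖ ≤ u.im}), 0 ≤ u.re :=
    (eventually_principal.2 fun u hu => hu.1).filter_mono inf_le_right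
  filter_upwards [hev] with u hu
  have harg : u.arg ≠ Real.pi := by
    intro h
    rw [Complex.arg_eq_pi_iff] at h
    linarith [h.1]
  simp only [Function.comp]
  rw [map_mul]
  congr 1
  · rw [← Complex.cpow_conj _ _ harg, Complex.conj_ofReal]
  · rw [intervalIntegral.integral_of_le (by norm_num), intervalIntegral.integral_of_le (by norm_num),
      ← integral_conj]
    refine setIntegral_congr_fun measurableSet_Ioc fun x hx => ?_
    rw [ff_real k _ x hx.1 hx.2, ff_real k _ x hx.1 hx.2]
    simp only [map_mul, Complex.conj_ofReal, ← Complex.exp_conj, map_neg, Complex.conj_conj]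

lemma half_plane (k : ℝ) (hk : 0 < k) :
    Tendsto (fun u : ℂ => u ^ (k : ℂ) * ∫ x : ℝ in (0 : ℝ)..2, ff k u x)
      (comap (fun z : ℂ => ‖z‖) atTop ⊓ 𝓟 {u | 0 ≤ u.re})
      (𝓝 (((2 ^ k : ℝ) : ℂ) * (Real.Gamma k : ℂ))) := by
  have h := ((region_A k hk).sup (region_B k hk)).sup (region_C k hk)
  rw [← inf_sup_left, ← inf_sup_left, sup_principal, sup_principal] at h
  refine h.mono_left (inf_le_inf_left _ (principal_mono.2 fun u hu => ?_))
  have hu : 0 ≤ u.re := hu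
  have h1 := Complex.norm_le_abs_re_add_abs_im u
  rw [abs_of_nonneg hu] at h1
  by_cases hA : 1 / 2 * ‖u‖ ≤ u.re
  · exact Or.inl (Or.inl hA)
  · rcases abs_cases u.im with h2 | h2
    · exact Or.inr ⟨hu, by linarith⟩
    · exact Or.inl (Or.inr ⟨hu, by linarith⟩)

lemma Dk_eq (k : ℝ) (u : ℂ) :
    Complex.exp (-u) * Dk k u =
      ((Real.Gamma (k + 1/2) / (Real.Gamma (1/2) * Real.Gamma k) : ℝ) : ℂ) *
        ∫ x : ℝ in (0 : ℝ)..2, ff k u x := by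
  unfold Dk
  have hs := intervalIntegral.integral_comp_sub_left (a := 0) (b := 2) (fun t : ℝ =>
    Complex.exp ((t : ℂ) * u) * (((1 - t) ^ (k - 1) * (1 + t) ^ k : ℝ) : ℂ)) 1
  rw [show (1 : ℝ) - 2 = -1 by norm_num, show (1 : ℝ) - 0 = 1 by norm_num] at hs
  rw [integral_Icc_eq_integral_Ioc, ← intervalIntegral.integral_of_le (by norm_num), ← hs,
    mul_left_comm, ← intervalIntegral.integral_const_mul,
    intervalIntegral.integral_of_le (by norm_num), intervalIntegral.integral_of_le (by norm_num)]
  congr 1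
  refine setIntegral_congr_fun measurableSet_Ioc fun x hx => ?_
  rw [ff_real k _ x hx.1 hx.2, ← mul_assoc, ← Complex.exp_add, mul_assoc, ← Complex.ofReal_mul]
  congr 2
  · push_cast; ring
  · congr 2 <;> ring_nf

/-- Asymptotics of the rank-one Dunkl kernel in the closed right half plane:
`z^k e^{-zxy} D_k(zxy) → Γ(2k+1)/(2^k Γ(k+1) (xy)^k)` as `z → ∞` with `Re z ≥ 0`. -/
theorem dunkl_stmt12 (k : ℝ) (hk : 0 < k) (x y : ℝ) (hx : 0 < x) (hy : 0 < y) :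
    Tendsto (fun z : ℂ => z ^ (k : ℂ) * Complex.exp (-(z * ((x : ℂ) * (y : ℂ)))) *
        Dk k (z * ((x : ℂ) * (y : ℂ))))
      (Filter.comap (fun z : ℂ => ‖z‖) atTop ⊓
        Filter.principal {z : ℂ | 0 ≤ z.re ∧ z ≠ 0})
      (nhds ((Real.Gamma (2 * k + 1) / (2 ^ k * Real.Gamma (k + 1) * (x * y) ^ k) : ℝ) : ℂ)) := by
  have hxy : 0 < x * y := mul_pos hx hy
  have hmap : Tendsto (fun z : ℂ => z * ((x : ℂ) * (y : ℂ)))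
      (comap (fun z : ℂ => ‖z‖) atTop ⊓ 𝓟 {z : ℂ | 0 ≤ z.re ∧ z ≠ 0})
      (comap (fun z : ℂ => ‖z‖) atTop ⊓ 𝓟 {u | 0 ≤ u.re}) := by
    refine tendsto_inf.2 ⟨?_, ?_⟩
    · rw [tendsto_comap_iff]
      refine Tendsto.mono_left ?_ inf_le_left
      refine (tendsto_comap.atTop_mul_const hxy).congr fun u => ?_
      simp [abs_of_pos hx, abs_of_pos hy]
    · refine tendsto_principal.2 ?_
      refine (eventually_principal.2 fun u hu => ?_).filter_mono inf_le_right
      have h1 : (u * ((x : ℂ) * (y : ℂ))).re = u.re * (x * y) := by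
        rw [← Complex.ofReal_mul, Complex.re_mul_ofReal]
      show 0 ≤ (u * ((x : ℂ) * (y : ℂ))).re
      rw [h1]
      exact mul_nonneg hu.1 hxy.le
  have h := ((half_plane k hk).comp hmap).const_mul
    (((Real.Gamma (k + 1/2) / (Real.Gamma (1/2) * Real.Gamma k) : ℝ) : ℂ) *
      (((x * y) ^ k : ℝ) : ℂ)⁻¹)
  have hval : ((Real.Gamma (k + 1/2) / (Real.Gamma (1/2) * Real.Gamma k) : ℝ) : ℂ) *
      (((x * y) ^ k : ℝ) : ℂ)⁻¹ * (((2 ^ k : ℝ) : ℂ) * (Real.Gamma k : ℂ)) =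
      ((Real.Gamma (2 * k + 1) / (2 ^ k * Real.Gamma (k + 1) * (x * y) ^ k) : ℝ) : ℂ) := by
    rw [← Complex.ofReal_inv, ← Complex.ofReal_mul, ← Complex.ofReal_mul, ← Complex.ofReal_mul]
    congr 1
    have d := Real.Gamma_mul_Gamma_add_half k
    have g1 := Real.Gamma_add_one hk.ne'
    have g2 := Real.Gamma_add_one (show 2 * k ≠ 0 by positivity)
    have p1 := Real.Gamma_pos_of_pos hk
    have p2 := Real.Gamma_pos_of_pos (show 0 < 2 * k by positivity)
    have p3 : (2 : ℝ) ^ (1 - 2 * k) = 2 / (2 ^ k * 2 ^ k) := by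
      rw [Real.rpow_sub two_pos, Real.rpow_one, two_mul, Real.rpow_add two_pos]
    have p4 : (0 : ℝ) < 2 ^ k := by positivity
    have p5 : (0 : ℝ) < (x * y) ^ k := by positivity
    have p6 : 0 < √Real.pi := Real.sqrt_pos.2 Real.pi_pos
    rw [p3] at d
    have d2 : Real.Gamma (k + 1 / 2) =
        Real.Gamma (2 * k) * (2 / (2 ^ k * 2 ^ k)) * √Real.pi / Real.Gamma k := by
      rw [← d]; field_simp
    rw [g1, g2, d2, Real.Gamma_one_half_eq]
    field_simp
  rw [hval] at h
  refine h.congr' ?_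
  have hev : ∀ᶠ z : ℂ in (comap (fun z : ℂ => ‖z‖) atTop ⊓ 𝓟 {z : ℂ | 0 ≤ z.re ∧ z ≠ 0}),
      z ≠ 0 := (eventually_principal.2 fun u hu => hu.2).filter_mono inf_le_right
  filter_upwards [hev] with z hz
  have hp : (((x * y) ^ k : ℝ) : ℂ) ≠ 0 := by
    have : (0 : ℝ) < (x * y) ^ k := by positivity
    exact_mod_cast this.ne'
  have hpow : (z * ((x : ℂ) * (y : ℂ))) ^ (k : ℂ) = (((x * y) ^ k : ℝ) : ℂ) * z ^ (k : ℂ) := by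
    rw [← real_mul_cpow _ hxy z hz k, mul_comm]
    push_cast
    rfl
  simp only [Function.comp]
  rw [mul_assoc (z ^ (k : ℂ)), Dk_eq, hpow]
  field_simp
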